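/- If char k = 2, then the principal minor ideal J_n is a primary ideal whose radical is the second Veronese ideal I_n (i.e., J_n is primary over I_n). -/

import Mathlib

open scoped BigOperators

namespace Veronese

open MvPolynomial

/-- `c m = C(m,2)`. -/
def c (m : ℕ) : ℕ := m.choose 2

variable (n : ℕ)

/-- multiplicity (as ℤ) of the index `i` in the unordered pair `s`. -/
def wt (s : Sym2 (Fin n)) : Fin n → ℤ :=
  Sym2.lift ⟨fun a b i => (if i = a then 1 else 0) + (if i = b then 1 else 0),
    fun a b => funext fun i => add_comm _ _⟩ s

/-- The Veronese grading map `V_n : ℤ^P → ℤ^n`, sending `e_{ij} ↦ e_i + e_j`. -/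
def Vmap : (Sym2 (Fin n) → ℤ) →ₗ[ℤ] (Fin n → ℤ) where
  toFun u := fun i => ∑ s : Sym2 (Fin n), u s * wt n s i
  map_add' u v := funext fun i => by
    simp [add_mul, Finset.sum_add_distrib]
  map_smul' m u := funext fun i => by
    simp [Finset.mul_sum, smul_eq_mul, mul_assoc]

/-- The Veronese lattice `L_n = ker V_n`. -/
def Llat : Submodule ℤ (Sym2 (Fin n) → ℤ) := LinearMap.ker (Vmap n)

/-- standard basis vector `e_{ij}` of `ℤ^P`. -/
def e (i j : Fin n) : Sym2 (Fin n) → ℤ := Pi.single s(i, j) 1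

lemma e_comm (i j : Fin n) : e n i j = e n j i := by
  unfold e; rw [Sym2.eq_swap]

/-- `[ij|ij] = e_{ii} + e_{jj} - 2 e_{ij}`. -/
def minorVec (i j : Fin n) : Sym2 (Fin n) → ℤ := e n i i + e n j j - 2 • e n i j

/-- The principal minor lattice `L'_n`. -/
def L'lat : Submodule ℤ (Sym2 (Fin n) → ℤ) :=
  Submodule.span ℤ {v | ∃ i j : Fin n, i < j ∧ v = minorVec n i j}

/-- the last index `n` (zero-based: `n-1`) of `Fin n`. -/
def lastIdx (hn : 0 < n) : Fin n := ⟨n - 1, Nat.sub_lt hn one_pos⟩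

/-- embedding `[n-1] → [n]`. -/
def ι : Fin (n - 1) → Fin n := Fin.castLE (Nat.sub_le n 1)

/-- `[in|jn] = e_{ij} + e_{nn} - e_{in} - e_{jn}` for `i,j ∈ [n-1]`. -/
def Bvec (hn : 0 < n) : Sym2 (Fin (n - 1)) → (Sym2 (Fin n) → ℤ) :=
  Sym2.lift ⟨fun i j =>
      e n (ι n i) (ι n j) + e n (lastIdx n hn) (lastIdx n hn)
        - e n (ι n i) (lastIdx n hn) - e n (ι n j) (lastIdx n hn),
    fun i j => by dsimp only; rw [e_comm n (ι n i) (ι n j)]; ring⟩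

/-- The family `B'`: `[in|in]` on the diagonal, `2[in|jn]` off it. -/
noncomputable def B'vec (hn : 0 < n) (s : Sym2 (Fin (n - 1))) : Sym2 (Fin n) → ℤ :=
  if s.IsDiag then Bvec n hn s else 2 • Bvec n hn s

/-- multiplicity (as ℕ) of the index `i` in the unordered pair `s`. -/
def wtN (s : Sym2 (Fin n)) : Fin n → ℕ :=
  Sym2.lift ⟨fun a b i => (if i = a then 1 else 0) + (if i = b then 1 else 0),
    fun a b => funext fun i => add_comm _ _⟩ s

/-- The Veronese degree of an exponent vector `u ∈ ℕ^P`. -/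
def VN (u : Sym2 (Fin n) →₀ ℕ) : Fin n → ℕ := fun i => ∑ s : Sym2 (Fin n), u s * wtN n s i

/-- The fiber `V_n^{-1}[b] = {u ∈ ℕ^P : V_n u = b}`. -/
def fiber (b : Fin n → ℕ) : Set (Sym2 (Fin n) →₀ ℕ) := {u | VN n u = b}

/-- natural inclusion `ℕ^P → ℤ^P`. -/
def toZ (u : Sym2 (Fin n) →₀ ℕ) : Sym2 (Fin n) → ℤ := fun s => (u s : ℤ)

lemma fiber_finite (b : Fin n → ℕ) : (fiber n b).Finite := by
  classical
  have hsub : fiber n b ⊆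
      ↑(Finset.Iic ((Finsupp.equivFunOnFinite.symm fun _ => ∑ i, b i) : Sym2 (Fin n) →₀ ℕ)) := by
    intro u hu
    simp only [Finset.coe_Iic, Set.mem_Iic, Finsupp.le_def]
    intro s
    induction s using Sym2.ind with
    | _ i j =>
      have h1 : u s(i, j) * wtN n s(i, j) i ≤ VN n u i :=
        Finset.single_le_sum (f := fun s => u s * wtN n s i)
          (fun s _ => Nat.zero_le _) (Finset.mem_univ s(i, j))
      have h2 : 1 ≤ wtN n s(i, j) i := by
        simp only [wtN, Sym2.lift_mk, if_pos rfl]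
        exact Nat.le_add_right 1 _
      have h3 : u s(i, j) ≤ b i := by
        have hb : VN n u i = b i := congrFun hu i
        calc u s(i, j) ≤ u s(i, j) * wtN n s(i, j) i := Nat.le_mul_of_pos_right _ h2
          _ ≤ VN n u i := h1
          _ = b i := hb
      calc u s(i, j) ≤ b i := h3
        _ ≤ ∑ i, b i := Finset.single_le_sum (fun _ _ => Nat.zero_le _) (Finset.mem_univ _)
        _ = (Finsupp.equivFunOnFinite.symm fun _ => ∑ i, b i) s(i, j) := by
            simp
  exact Set.Finite.subset (Finset.finite_toSet _) hsub

variable (k : Type*) [Field k]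

/-- the polynomial ring `k[x_{ij}]`. -/
abbrev R := MvPolynomial (Sym2 (Fin n)) k

/-- The principal minor ideal `J_n`. -/
noncomputable def Jideal : Ideal (R n k) :=
  Ideal.span {f | ∃ i j : Fin n, i < j ∧ f = X s(i, i) * X s(j, j) - X s(i, j) ^ 2}

/-- The map `x_{ij} ↦ t_i t_j`. -/
noncomputable def veroHom : R n k →ₐ[k] MvPolynomial (Fin n) k :=
  aeval fun s => Sym2.lift ⟨fun a b => X a * X b, fun a b => mul_comm _ _⟩ s

/-- The second Veronese ideal `I_n`. -/
noncomputable def Iideal : Ideal (R n k) := RingHom.ker (veroHom n k)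

/-- A ℤ₂-twisting: an automorphism sending each variable to ± itself. -/
def IsTwisting (φ : R n k ≃ₐ[k] R n k) : Prop :=
  ∀ s : Sym2 (Fin n), φ (X s) = X s ∨ φ (X s) = - X s

/-- `f` is V_n-homogeneous of degree `b`. -/
def VHomog (f : R n k) (b : Fin n → ℕ) : Prop := ∀ u ∈ f.support, VN n u = b

/-- The fiber over `b` as a finite set. -/
noncomputable def fiberFinset (b : Fin n → ℕ) : Finset (Sym2 (Fin n) →₀ ℕ) :=
  (fiber_finite n b).toFinset

/-- generating function of the canonical (0/1 off-diagonal) representatives of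
the fiber over `b`. -/
noncomputable def pplusAt (b : Fin n → ℕ) : R n k :=
  ∑ u ∈ (fiberFinset n b).filter (fun u => ∀ s : Sym2 (Fin n), ¬s.IsDiag → u s ≤ 1),
    monomial u (1 : k)

/-- `p⁺_{n,j}` (for `n` odd): fiber over `(n-2,…,n-2) + e_j`. -/
noncomputable def pplusOdd (j : Fin n) : R n k :=
  pplusAt n k fun i => (n - 2) + if i = j then 1 else 0

/-- `p⁺_n` (for `n` even): fiber over `(n-2,…,n-2)`. -/
noncomputable def pplusEven : R n k :=
  pplusAt n k fun _ => n - 2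

/-- `p_n = ∏_{i<j∈[n-1]} (x_{ij} x_{nn} + x_{in} x_{jn})`. -/
noncomputable def pn (hn : 0 < n) : R n k :=
  ∏ p ∈ Finset.univ.filter (fun p : Fin (n - 1) × Fin (n - 1) => p.1 < p.2),
    (X s(ι n p.1, ι n p.2) * X s(lastIdx n hn, lastIdx n hn)
      + X s(ι n p.1, lastIdx n hn) * X s(ι n p.2, lastIdx n hn))

/-!
Let `G` be the elementary abelian `2`-group on generators `g_{ij}`, `i < j`, and put `g_{ii} = 1`.
In any characteristic, `J_n` is the kernel of the refined Veronese map
`Φ : x_{ij} ↦ t_i t_j g_{ij}` into the group algebra `k[t][G]`: modulo `J_n` every monomial can be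
rewritten with off-diagonal exponents at most `1`, and such a monomial is determined by its image.
The Veronese map is `Φ` followed by the augmentation `ε : k[t][G] → k[t]`. In characteristic `2`,
`y² = ε(y)²` for all `y` in `k[t][G]`; since `k[t][G]` is torsion-free over the domain `k[t]`, the
zero ideal of `k[t][G]` is primary with radical `ker ε`. Both properties pull back along `Φ`.
-/

section GroupAlgebra

open AddMonoidAlgebra Bialgebra

variable {A G : Type*} [CommRing A] [AddCommMonoid G] {p : ℕ}

lemma addMonoidAlgebra_pow_expChar [ExpChar A p] (hG : ∀ g : G, p • g = 0) (x : A[G]) :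
    x ^ p = algebraMap A A[G] (counitAlgHom A A[G] x ^ p) := by
  have : ExpChar A[G] p := expChar_of_injective_ringHom
    (f := (singleZeroRingHom : A →+* A[G])) single_right_injective p
  induction x using AddMonoidAlgebra.induction_linear with
  | zero => simp [zero_pow (expChar_ne_zero A p)]
  | add x y hx hy => rw [add_pow_expChar, map_add, add_pow_expChar, map_add, hx, hy]
  | single g a => simp [coe_algebraMap, single_pow, hG]

lemma addMonoidAlgebra_radical_bot [IsReduced A] [ExpChar A p] (hG : ∀ g : G, p • g = 0) :
    (⊥ : Ideal A[G]).radical = RingHom.ker (counitAlgHom A A[G]) := by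
  ext x
  simp only [Ideal.mem_radical_iff, Ideal.mem_bot, RingHom.mem_ker]
  constructor
  · rintro ⟨m, hm⟩
    exact eq_zero_of_pow_eq_zero (by rw [← map_pow, hm, map_zero])
  · intro hx
    exact ⟨p, by rw [addMonoidAlgebra_pow_expChar hG, hx, zero_pow (expChar_ne_zero A p),
      map_zero]⟩

lemma addMonoidAlgebra_isPrimary_bot [IsDomain A] [ExpChar A p] (hG : ∀ g : G, p • g = 0) :
    (⊥ : Ideal A[G]).IsPrimary := by
  rw [Ideal.isPrimary_iff, addMonoidAlgebra_radical_bot hG]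
  refine ⟨bot_ne_top, fun {x y} hxy ↦ ?_⟩
  obtain ⟨z, hz⟩ : y ∣ y ^ p := dvd_pow_self y (expChar_ne_zero A p)
  have hsmul : counitAlgHom A A[G] y ^ p • x = 0 :=
    calc counitAlgHom A A[G] y ^ p • x
      _ = y ^ p * x := by rw [Algebra.smul_def, ← addMonoidAlgebra_pow_expChar hG]
      _ = x * y * z := by rw [hz]; ring
      _ = 0 := by rw [Ideal.mem_bot.1 hxy, zero_mul]
  exact (smul_eq_zero.1 hsmul).symm.imp_right eq_zero_of_pow_eq_zero

end GroupAlgebra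

variable {n k}

lemma veroHom_X (s : Sym2 (Fin n)) :
    veroHom n k (X s) = monomial (Finsupp.equivFunOnFinite.symm (wtN n s)) 1 := by
  induction s using Sym2.ind with
  | _ i j =>
    have hexp : Finsupp.equivFunOnFinite.symm (wtN n s(i, j)) =
        Finsupp.single i 1 + Finsupp.single j 1 := by
      ext l
      simp [wtN, Finsupp.single_apply, eq_comm]
    rw [hexp, veroHom, aeval_X, Sym2.lift_mk]
    simp [X, monomial_mul]

lemma veroHom_monomial (u : Sym2 (Fin n) →₀ ℕ) (a : k) :
    veroHom n k (monomial u a) = monomial (Finsupp.equivFunOnFinite.symm (VN n u)) a := by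
  have hsum : Finsupp.equivFunOnFinite.symm (VN n u) =
      ∑ s, u s • Finsupp.equivFunOnFinite.symm (wtN n s) := by
    ext i
    simp [VN, Finsupp.finsetSum_apply]
  rw [monomial_eq, Finsupp.prod_fintype _ _ (by simp), hsum, map_mul, map_prod]
  simp only [algHom_C, algebraMap_eq, map_pow, veroHom_X, monomial_pow, one_pow, ← monomial_sum_one,
    C_mul_monomial, mul_one]

/-- The parities of the off-diagonal entries of an exponent vector, with values in the group
generated by the `g_{ij}`, written additively. -/
def offDiagParity : (Sym2 (Fin n) →₀ ℕ) →+ ({s : Sym2 (Fin n) // ¬ s.IsDiag} → ZMod 2) where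
  toFun u s := u s
  map_zero' := by ext; simp
  map_add' u v := by ext; simp

variable (n k) in
/-- The refinement `x_{ij} ↦ t_i t_j g_{ij}` of the Veronese map, where the `g_{ij}` with `i ≠ j`
are independent generators of an elementary abelian `2`-group and `g_{ii} = 1`. -/
noncomputable def fineVeroHom : R n k →ₐ[k]
    AddMonoidAlgebra (MvPolynomial (Fin n) k) ({s : Sym2 (Fin n) // ¬ s.IsDiag} → ZMod 2) :=
  aeval fun s ↦ .single (offDiagParity (.single s 1)) (veroHom n k (X s))

lemma counit_comp_fineVeroHom :
    ((Bialgebra.counitAlgHom (MvPolynomial (Fin n) k) _).restrictScalars k).comp (fineVeroHom n k) =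
      veroHom n k := by
  ext s
  simp [fineVeroHom]

lemma fineVeroHom_monomial (u : Sym2 (Fin n) →₀ ℕ) (a : k) :
    fineVeroHom n k (monomial u a) = .single (offDiagParity u) (veroHom n k (monomial u a)) := by
  induction u using Finsupp.induction_linear generalizing a with
  | zero =>
    simp [algHom_C, algebraMap_eq, AddMonoidAlgebra.coe_algebraMap]
  | add u v hu hv =>
    rw [← mul_one a, ← monomial_mul, map_mul, hu, hv, AddMonoidAlgebra.single_mul_single,
      ← map_add, ← map_mul]
  | single s m =>
    rw [← C_mul_X_pow_eq_monomial, ← Finsupp.smul_single_one s m, map_nsmul]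
    simp only [fineVeroHom, map_mul, map_pow, algHom_C, aeval_X, AddMonoidAlgebra.single_pow,
      AddMonoidAlgebra.coe_algebraMap, Function.comp_apply, AddMonoidAlgebra.single_mul_single,
      zero_add]

lemma diag_mul_diag_sub_sq_mem_Jideal (i j : Fin n) :
    X s(i, i) * X s(j, j) - X s(i, j) ^ 2 ∈ Jideal n k := by
  rcases lt_trichotomy i j with hij | rfl | hji
  · exact Ideal.subset_span ⟨i, j, hij, rfl⟩
  · simp [sq]
  · rw [mul_comm, Sym2.eq_swap (a := i) (b := j)]
    exact Ideal.subset_span ⟨j, i, hji, rfl⟩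

lemma monomial_diag_sub_monomial_offDiag_mem_Jideal (w : Sym2 (Fin n) →₀ ℕ) (i j : Fin n) (a : k) :
    monomial (w + (.single s(i, i) 1 + .single s(j, j) 1)) a - monomial (w + .single s(i, j) 2) a ∈
      Jideal n k := by
  have hmul : monomial w a * (X s(i, i) * X s(j, j) - X s(i, j) ^ 2) =
      monomial (w + (.single s(i, i) 1 + .single s(j, j) 1)) a -
        monomial (w + .single s(i, j) 2) a := by
    simp [X, monomial_pow, mul_sub, monomial_mul]
  exact hmul ▸ Ideal.mul_mem_left _ _ (diag_mul_diag_sub_sq_mem_Jideal i j)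

lemma Jideal_le_ker_fineVeroHom : Jideal n k ≤ RingHom.ker (fineVeroHom n k) := by
  rw [Jideal, Ideal.span_le]
  rintro _ ⟨i, j, -, rfl⟩
  have hdiag (l : Fin n) : offDiagParity (.single s(l, l) 1) = 0 := by
    ext s
    obtain ⟨s, hs⟩ := s
    have : s ≠ s(l, l) := by rintro rfl; simp at hs
    simp [offDiagParity, this]
  have hvero : veroHom n k (X s(i, j)) ^ 2 = veroHom n k (X s(i, i)) * veroHom n k (X s(j, j)) := by
    simp only [veroHom, aeval_X, Sym2.lift_mk]
    ring
  rw [SetLike.mem_coe, RingHom.mem_ker, map_sub, sub_eq_zero, map_mul, map_pow]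
  simp only [fineVeroHom, aeval_X, hdiag, AddMonoidAlgebra.single_pow,
    AddMonoidAlgebra.single_mul_single, ZModModule.char_nsmul_eq_zero, add_zero, hvero]

/-- The exponent vectors with all off-diagonal entries `0` or `1`, the canonical representatives of
exponent vectors modulo the relations `e_{ii} + e_{jj} ∼ 2 e_{ij}`. -/
def IsCanonical (u : Sym2 (Fin n) →₀ ℕ) : Prop :=
  ∀ s : Sym2 (Fin n), ¬ s.IsDiag → u s ≤ 1

lemma exists_isCanonical_monomial_sub_mem_Jideal (u : Sym2 (Fin n) →₀ ℕ) (a : k) :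
    ∃ v, IsCanonical v ∧ monomial u a - monomial v a ∈ Jideal n k := by
  let offDiagDegree : (Sym2 (Fin n) →₀ ℕ) →+ ℕ :=
    Finsupp.weight fun s ↦ if s.IsDiag then 0 else 1
  induction hd : offDiagDegree u using Nat.strong_induction_on generalizing u with
  | _ d ih =>
    by_cases hu : IsCanonical u
    · exact ⟨u, hu, by simp⟩
    obtain ⟨s, hs, hus⟩ : ∃ s : Sym2 (Fin n), ¬ s.IsDiag ∧ 2 ≤ u s := by
      simpa [IsCanonical, Nat.lt_iff_add_one_le] using hu
    induction s using Sym2.ind with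
    | _ i j =>
    obtain ⟨w, rfl⟩ : ∃ w, u = w + .single s(i, j) 2 :=
      ⟨_, (tsub_add_cancel_of_le (Finsupp.single_le_iff.2 hus)).symm⟩
    let u' := w + (.single s(i, i) 1 + .single s(j, j) 1)
    have hlt : offDiagDegree u' < d := by
      have hij : i ≠ j := by simpa using hs
      simp [← hd, u', offDiagDegree, Finsupp.weight_single, hij]
    obtain ⟨v, hv, huv⟩ := ih _ hlt u' rfl
    refine ⟨v, hv, ?_⟩
    simpa [u'] using sub_mem huv (monomial_diag_sub_monomial_offDiag_mem_Jideal w i j a)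

lemma exists_mem_restrictSupport_sub_mem_Jideal (f : R n k) :
    ∃ r ∈ restrictSupport k {u | IsCanonical (n := n) u}, f - r ∈ Jideal n k := by
  induction f using MvPolynomial.induction_on' with
  | monomial u a =>
    obtain ⟨v, hv, huv⟩ := exists_isCanonical_monomial_sub_mem_Jideal u a
    exact ⟨monomial v a, (monomial_mem_restrictSupport k).2 (.inl hv), huv⟩
  | add f g hf hg =>
    obtain ⟨r, hr, hfr⟩ := hf
    obtain ⟨t, ht, hgt⟩ := hg
    exact ⟨r + t, add_mem hr ht, by simpa [add_sub_add_comm] using add_mem hfr hgt⟩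

lemma IsCanonical.apply_eq_of_offDiagParity_eq {u v : Sym2 (Fin n) →₀ ℕ} (hu : IsCanonical u)
    (hv : IsCanonical v) (hparity : offDiagParity u = offDiagParity v) {s : Sym2 (Fin n)}
    (hs : ¬ s.IsDiag) : u s = v s := by
  have hmod : u s % 2 = v s % 2 :=
    (ZMod.natCast_eq_natCast_iff _ _ _).1 (congrFun hparity ⟨s, hs⟩)
  have hus := hu s hs
  have hvs := hv s hs
  lia

lemma apply_diag_eq_of_VN_eq {u v : Sym2 (Fin n) →₀ ℕ}
    (hoff : ∀ s : Sym2 (Fin n), ¬ s.IsDiag → u s = v s) (hdeg : VN n u = VN n v) (i : Fin n) :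
    u s(i, i) = v s(i, i) := by
  have hrest : ∑ s ∈ Finset.univ.erase s(i, i), u s * wtN n s i =
      ∑ s ∈ Finset.univ.erase s(i, i), v s * wtN n s i := by
    refine Finset.sum_congr rfl fun s hs ↦ ?_
    by_cases hsd : s.IsDiag
    · induction s using Sym2.ind with
      | _ j l =>
        obtain rfl : j = l := hsd
        have hij : i ≠ j := by rintro rfl; simp at hs
        simp [wtN, hij]
    · rw [hoff s hsd]
  have hi := congrFun hdeg i
  simp only [VN, ← Finset.add_sum_erase _ _ (Finset.mem_univ s(i, i)), hrest] at hi
  simpa [wtN] using hi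

lemma IsCanonical.eq_of_offDiagParity_eq_of_VN_eq {u v : Sym2 (Fin n) →₀ ℕ}
    (hu : IsCanonical u) (hv : IsCanonical v) (hparity : offDiagParity u = offDiagParity v)
    (hdeg : VN n u = VN n v) : u = v := by
  have hoff (s : Sym2 (Fin n)) (hs : ¬ s.IsDiag) : u s = v s :=
    hu.apply_eq_of_offDiagParity_eq hv hparity hs
  ext s
  by_cases hs : s.IsDiag
  · induction s using Sym2.ind with
    | _ i j =>
      obtain rfl : i = j := hs
      exact apply_diag_eq_of_VN_eq hoff hdeg i
  · exact hoff s hs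

lemma coeff_coeff_fineVeroHom {r : R n k} (hr : r ∈ restrictSupport k {u | IsCanonical u})
    {u : Sym2 (Fin n) →₀ ℕ} (hu : IsCanonical u) :
    coeff (Finsupp.equivFunOnFinite.symm (VN n u)) ((fineVeroHom n k r).coeff (offDiagParity u)) =
      coeff u r := by
  rw [restrictSupport_eq_span] at hr
  induction hr using Submodule.span_induction with
  | mem r hr =>
    obtain ⟨v, hv, rfl⟩ := hr
    rw [fineVeroHom_monomial, veroHom_monomial, AddMonoidAlgebra.coeff_single, coeff_monomial]
    rcases eq_or_ne v u with rfl | hvu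
    · simp
    rw [if_neg hvu]
    by_cases hparity : offDiagParity v = offDiagParity u
    · have hdeg : VN n v ≠ VN n u := fun h ↦ hvu <| hv.eq_of_offDiagParity_eq_of_VN_eq hu hparity h
      simp [hparity, hdeg]
    · simp [hparity]
  | zero => simp
  | add r t _ _ hr ht => simp [hr, ht]
  | smul a r _ hr => simp [hr]

lemma ker_fineVeroHom : RingHom.ker (fineVeroHom n k) = Jideal n k := by
  refine le_antisymm (fun f hf ↦ ?_) Jideal_le_ker_fineVeroHom
  obtain ⟨r, hr, hfr⟩ := exists_mem_restrictSupport_sub_mem_Jideal f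
  have hr0 : fineVeroHom n k r = 0 := by
    have hfr0 := Jideal_le_ker_fineVeroHom hfr
    rwa [RingHom.mem_ker, map_sub, RingHom.mem_ker.1 hf, zero_sub, neg_eq_zero] at hfr0
  suffices r = 0 by simpa [this] using hfr
  ext u
  by_cases hu : IsCanonical u
  · simp [← coeff_coeff_fineVeroHom hr hu, hr0]
  · exact notMem_support_iff.1 fun hur ↦ hu (hr hur)

/-- If `char k = 2` then `J_n` is primary with radical `I_n`. -/
theorem principal_minor_ideal_primary_char_two (n : ℕ) (hn : 2 ≤ n)
    (k : Type*) [Field k] [CharP k 2] :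
    (Jideal n k).IsPrimary ∧ (Jideal n k).radical = Iideal n k := by
  have hG (g : {s : Sym2 (Fin n) // ¬ s.IsDiag} → ZMod 2) : 2 • g = 0 :=
    ZModModule.char_nsmul_eq_zero 2 g
  rw [← ker_fineVeroHom, RingHom.ker_eq_comap_bot]
  refine ⟨(addMonoidAlgebra_isPrimary_bot hG).comap _, ?_⟩
  rw [← Ideal.comap_radical, addMonoidAlgebra_radical_bot hG, Iideal, ← counit_comp_fineVeroHom]
  exact RingHom.comap_ker _ _

end Veronese
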